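/- arXiv:2412.07896 — 7 statements merged into one kernel-verified Lean document; each statement's English description precedes it below -/
import Mathlib

section
/- Let A and B be real numbers with |A| ≠ |B|, and define the real polynomial p(λ) := (16A² + 16B²)λ² − 16ABλ(λ² + 1) − (λ² − 1)², so that det K(λ) = p(λ)/λ² for every λ ≠ 0. Then p has degree 4 and has four distinct real roots, exactly one in each of the intervals (−∞,−1), (−1,0), (0,1) and (1,∞); in particular no root of p lies in {−1, 0, 1}. Moreover, a nonzero λ₀ is a root of p if and only if 1/λ₀ is a root of p. -/
/-!
Write `p` for `detPoly A B`. For `x ≠ 0` one has `p(x) = x² q(x + x⁻¹)` with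
`q(t) = 16A² + 16B² + 4 - 16ABt - t²`, so the nonzero roots of `p` are closed under inversion.

Existence: `p(0) = -1` while `p(±1) = 16(A ∓ B)² > 0`, so the intermediate value theorem gives
a root in each of `(-1, 0)` and `(0, 1)`; their inverses lie in `(-∞, -1)` and `(1, ∞)`.

Uniqueness: the product of the two roots of `q` is `-(16A² + 16B² + 4) < 0`, so two roots `x, y`
of `p` of the same sign have `x + x⁻¹ = y + y⁻¹`, that is `x = y` or `xy = 1`
(`eq_or_mul_eq_one_of_roots`). The latter is impossible within a single one of the intervals.
-/

open Polynomial

/-- Sklyanin's K-matrix. -/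
noncomputable def K (A B : ℝ) (l : ℂ) : Matrix (Fin 2) (Fin 2) ℂ :=
  !![4*(A:ℂ) - 4*(B:ℂ)*l, l - l⁻¹; l - l⁻¹, 4*(A:ℂ) - 4*(B:ℂ)*l⁻¹]

/-- The polynomial p(λ) = (16A² + 16B²)λ² − 16ABλ(λ² + 1) − (λ² − 1)². -/
noncomputable def detPoly (A B : ℝ) : Polynomial ℝ :=
  C (16*A^2 + 16*B^2) * X^2 - C (16*A*B) * (X * (X^2 + 1)) - (X^2 - 1)^2

lemma eval_detPoly (A B x : ℝ) : (detPoly A B).eval x =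
    (16*A^2 + 16*B^2) * x^2 - 16*A*B * (x * (x^2 + 1)) - (x^2 - 1)^2 := by
  simp [detPoly]

lemma aeval_detPoly (A B : ℝ) (l : ℂ) : aeval l (detPoly A B) =
    (16*(A:ℂ)^2 + 16*(B:ℂ)^2) * l^2 - 16*A*B * (l * (l^2 + 1)) - (l^2 - 1)^2 := by
  simp [detPoly]

/-- `p` is self-reciprocal of degree 4. -/
lemma aeval_inv_detPoly (A B : ℝ) {l : ℂ} (hl : l ≠ 0) :
    aeval l⁻¹ (detPoly A B) = aeval l (detPoly A B) / l^4 := by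
  rw [aeval_detPoly, aeval_detPoly]
  field_simp
  ring

lemma eval_inv_detPoly (A B : ℝ) {x : ℝ} (hx : x ≠ 0) :
    (detPoly A B).eval x⁻¹ = (detPoly A B).eval x / x^4 := by
  rw [eval_detPoly, eval_detPoly]
  field_simp
  ring

lemma eval_one_pos {A B : ℝ} (hAB : |A| ≠ |B|) : 0 < (detPoly A B).eval 1 := by
  have h : A - B ≠ 0 := fun h => hAB (by rw [sub_eq_zero.mp h])
  have := pow_pos (abs_pos.mpr h) 2
  rw [sq_abs] at this
  rw [eval_detPoly]
  linarith

lemma eval_neg_one_pos {A B : ℝ} (hAB : |A| ≠ |B|) : 0 < (detPoly A B).eval (-1) := by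
  have h : A + B ≠ 0 := fun h => hAB (by rw [eq_neg_of_add_eq_zero_left h, abs_neg])
  have := pow_pos (abs_pos.mpr h) 2
  rw [sq_abs] at this
  rw [eval_detPoly]
  linarith

lemma eval_zero_neg (A B : ℝ) : (detPoly A B).eval 0 < 0 := by
  rw [eval_detPoly]
  norm_num

/-- Two roots of `p` of the same sign are equal or mutually inverse: otherwise `x + x⁻¹` and
`y + y⁻¹` would be the two distinct roots of `q`, whose product is negative. -/
lemma eq_or_mul_eq_one_of_roots {A B x y : ℝ} (hx : (detPoly A B).eval x = 0)
    (hy : (detPoly A B).eval y = 0) (hxy : 0 < x * y) : x = y ∨ x * y = 1 := by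
  rw [eval_detPoly] at hx hy
  have key : (x - y) * (x * y - 1) *
      (-16*A*B*(x*y) - (x^2 + 1) * y - (y^2 + 1) * x) = 0 := by
    linear_combination y^2 * hx - x^2 * hy
  rcases mul_eq_zero.mp key with h | h
  · rcases mul_eq_zero.mp h with h | h
    · exact Or.inl (sub_eq_zero.mp h)
    · exact Or.inr (sub_eq_zero.mp h)
  · exfalso
    have hx0 : x ≠ 0 := left_ne_zero_of_mul hxy.ne'
    -- Vieta's product formula for `q`, cleared of denominators
    have hprod : x * ((16*A^2 + 16*B^2 + 4) * (x*y) + (x^2 + 1) * (y^2 + 1)) = 0 := by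
      linear_combination y * hx - (x^2 + 1) * h
    have := (mul_eq_zero.mp hprod).resolve_left hx0
    have h1 : 0 < (16*A^2 + 16*B^2 + 4) * (x*y) := by positivity
    have h2 : 0 < (x^2 + 1) * (y^2 + 1) := by positivity
    linarith

lemma degree_detPoly (A B : ℝ) : (detPoly A B).degree = 4 := by
  unfold detPoly
  compute_degree!

theorem stmt0 (A B : ℝ) (hAB : |A| ≠ |B|) :
    (∀ l : ℂ, l ≠ 0 → (K A B l).det = (aeval l) (detPoly A B) / l^2) ∧
    (detPoly A B).degree = 4 ∧
    (∃! x : ℝ, x ∈ Set.Iio (-1 : ℝ) ∧ (detPoly A B).eval x = 0) ∧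
    (∃! x : ℝ, x ∈ Set.Ioo (-1 : ℝ) 0 ∧ (detPoly A B).eval x = 0) ∧
    (∃! x : ℝ, x ∈ Set.Ioo (0 : ℝ) 1 ∧ (detPoly A B).eval x = 0) ∧
    (∃! x : ℝ, x ∈ Set.Ioi (1 : ℝ) ∧ (detPoly A B).eval x = 0) ∧
    (∀ x : ℝ, (detPoly A B).eval x = 0 → x ∉ ({-1, 0, 1} : Set ℝ)) ∧
    (∀ l : ℂ, l ≠ 0 → ((aeval l) (detPoly A B) = 0 ↔ (aeval l⁻¹) (detPoly A B) = 0)) := by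
  have hcont : Continuous fun x : ℝ => (detPoly A B).eval x := (detPoly A B).continuous
  obtain ⟨u, ⟨hu1, hu0⟩, hu⟩ : ∃ u ∈ Set.Ioo (-1 : ℝ) 0, (detPoly A B).eval u = 0 :=
    intermediate_value_Ioo' (by norm_num) hcont.continuousOn
      ⟨eval_zero_neg A B, eval_neg_one_pos hAB⟩
  obtain ⟨v, ⟨hv0, hv1⟩, hv⟩ : ∃ v ∈ Set.Ioo (0 : ℝ) 1, (detPoly A B).eval v = 0 :=
    intermediate_value_Ioo (by norm_num) hcont.continuousOn
      ⟨eval_zero_neg A B, eval_one_pos hAB⟩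
  refine ⟨fun l hl => ?_, degree_detPoly A B, ⟨u⁻¹, ⟨?_, ?_⟩, ?_⟩, ⟨u, ⟨⟨hu1, hu0⟩, hu⟩, ?_⟩,
    ⟨v, ⟨⟨hv0, hv1⟩, hv⟩, ?_⟩, ⟨v⁻¹, ⟨?_, ?_⟩, ?_⟩, ?_, fun l hl => ?_⟩
  · rw [aeval_detPoly, K, Matrix.det_fin_two_of]
    field_simp
    ring
  · have := one_lt_inv_iff₀.mpr ⟨neg_pos.mpr hu0, neg_lt.mp hu1⟩
    rw [inv_neg] at this
    exact lt_neg.mp this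
  · rw [eval_inv_detPoly A B hu0.ne, hu, zero_div]
  · rintro y ⟨hy, hy0⟩
    have hy : y < -1 := hy
    -- `u * y = 1` already means `y = u⁻¹`
    rcases eq_or_mul_eq_one_of_roots hu hy0 (by nlinarith) with h | h
    · linarith
    · exact eq_inv_of_mul_eq_one_right h
  · rintro y ⟨⟨hy1, hy2⟩, hy0⟩
    rcases eq_or_mul_eq_one_of_roots hu hy0 (by nlinarith) with h | h
    · exact h.symm
    · nlinarith
  · rintro y ⟨⟨hy1, hy2⟩, hy0⟩
    rcases eq_or_mul_eq_one_of_roots hv hy0 (by nlinarith) with h | h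
    · exact h.symm
    · nlinarith
  · exact one_lt_inv_iff₀.mpr ⟨hv0, hv1⟩
  · rw [eval_inv_detPoly A B hv0.ne', hv, zero_div]
  · rintro y ⟨hy, hy0⟩
    have hy : 1 < y := hy
    rcases eq_or_mul_eq_one_of_roots hv hy0 (by nlinarith) with h | h
    · linarith
    · exact eq_inv_of_mul_eq_one_right h
  · rintro x hx (rfl | rfl | rfl)
    · exact (eval_neg_one_pos hAB).ne' hx
    · exact (eval_zero_neg A B).ne hx
    · exact (eval_one_pos hAB).ne' hx
  · rw [aeval_inv_detPoly A B hl, div_eq_zero_iff, or_iff_left (pow_ne_zero 4 hl)]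
end

section
/- The identity K(λ,γ) · ξ(λ,γ) = λ^q γ^{−q} · ξ(λ⁻¹, γ⁻¹) · K(λ,γ) holds for all λ, γ ∈ ℂ \ {0} if and only if A₁^q(m,n) = 0, A₂^q(m,n) = 0 and A₃^q(m,n) = 0 for all (m,n) ∈ ℤ × ℤ. -/
/-!
Both sides of the reflection identity are Laurent polynomials in `(λ, γ)`. The coefficients of
`λ^m γ^n` in the `(0,0)`, `(0,1)` and `(1,0)` entries of
`K(λ,γ) ξ(λ,γ) - λ^q γ^(-q) ξ(λ⁻¹,γ⁻¹) K(λ,γ)` are exactly `A₁^q(m,n)`, `A₂^q(m,n)` and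
`A₃^q(m,n)` (`isLaurent_A1`, `isLaurent_A2`, `isLaurent_A3`). A Laurent polynomial vanishing on
`(ℂ \ {0})²` has zero coefficients, by linear independence of the characters `(λ, γ) ↦ λ^m γ^n`
of `ℂˣ × ℂˣ` (`IsLaurent.eq_zero_iff`), so these three entries vanish iff the `Aᵢ^q` do.
The `(1,1)` entry gives nothing new: it is `λ^q γ^(-q)` times the `(0,0)` entry evaluated
at `(λ⁻¹, γ⁻¹)`.
-/

/-- The quantity A₁^q(m,n). -/
noncomputable def A1 (q : ℤ) (A B : ℝ) (ω σ τ : ℤ → ℤ → ℂ) (m n : ℤ) : ℂ :=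
  τ (m-1) (n+1) - 4*(B:ℂ)*ω (m-1) n + 4*(A:ℂ)*ω m (n-1) - τ (m+1) (n-1)
  + σ (q-m-1) (-q-n+1) - 4*(A:ℂ)*ω (q-m) (-q-n+1) + 4*(B:ℂ)*ω (q-m+1) (-q-n)
  - σ (q-m+1) (-q-n-1)

/-- The quantity A₂^q(m,n). -/
noncomputable def A2 (q : ℤ) (A B : ℝ) (ω σ τ : ℤ → ℤ → ℂ) (m n : ℤ) : ℂ :=
  -ω (m-1) (n+1) - 4*(B:ℂ)*σ (m-1) n + 4*(A:ℂ)*σ m (n-1) + ω (m+1) (n-1)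
  + ω (q-m-1) (-q-n+1) + 4*(B:ℂ)*σ (q-m-1) (-q-n) - 4*(A:ℂ)*σ (q-m) (-q-n-1)
  - ω (q-m+1) (-q-n-1)

/-- The quantity A₃^q(m,n). -/
noncomputable def A3 (q : ℤ) (A B : ℝ) (ω σ τ : ℤ → ℤ → ℂ) (m n : ℤ) : ℂ :=
  ω (m-1) (n+1) + 4*(A:ℂ)*τ m (n+1) - 4*(B:ℂ)*τ (m+1) n - ω (m+1) (n-1)
  - ω (q-m-1) (-q-n+1) - 4*(A:ℂ)*τ (q-m) (-q-n+1) + 4*(B:ℂ)*τ (q-m+1) (-q-n)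
  + ω (q-m+1) (-q-n-1)

/-- The two-variable potential ξ(λ,γ) = Σ λ^m γ^n ξ_{m,n}. -/
noncomputable def xiMat (ω σ τ : ℤ → ℤ → ℂ) (l γ : ℂ) : Matrix (Fin 2) (Fin 2) ℂ :=
  ∑ᶠ p : ℤ × ℤ, (l ^ p.1 * γ ^ p.2) • !![ω p.1 p.2, σ p.1 p.2; τ p.1 p.2, -ω p.1 p.2]

/-- The homogenized K-matrix K(λ,γ). -/
noncomputable def Kh (A B : ℝ) (l γ : ℂ) : Matrix (Fin 2) (Fin 2) ℂ :=
  !![4*(A:ℂ)*γ - 4*(B:ℂ)*l, l/γ - γ/l; l/γ - γ/l, 4*(A:ℂ)/γ - 4*(B:ℂ)/l]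

/-- `F` is, on `(ℂ \ {0})²`, the Laurent polynomial with coefficients `f`. The finiteness of the
support makes the `finsum` an honest sum. -/
structure IsLaurent (f : ℤ → ℤ → ℂ) (F : ℂ → ℂ → ℂ) : Prop where
  finite : (Function.support fun p : ℤ × ℤ => f p.1 p.2).Finite
  eval : ∀ l γ : ℂ, l ≠ 0 → γ ≠ 0 →
    F l γ = ∑ᶠ p : ℤ × ℤ, (l ^ p.1 * γ ^ p.2) * f p.1 p.2

namespace IsLaurent

variable {f g : ℤ → ℤ → ℂ} {F G : ℂ → ℂ → ℂ}

theorem finite_mul (hf : (Function.support fun p : ℤ × ℤ => f p.1 p.2).Finite) (l γ : ℂ) :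
    (Function.support fun p : ℤ × ℤ => (l ^ p.1 * γ ^ p.2) * f p.1 p.2).Finite :=
  hf.subset fun p hp h => hp (by simp only at h ⊢; rw [h, mul_zero])

theorem congr (h : IsLaurent f F) (hf : ∀ m n, g m n = f m n)
    (hF : ∀ l γ : ℂ, l ≠ 0 → γ ≠ 0 → G l γ = F l γ) : IsLaurent g G where
  finite := by simpa only [hf] using h.finite
  eval l γ hl hγ := by simp only [hf, hF l γ hl hγ, h.eval l γ hl hγ]

theorem add (hf : IsLaurent f F) (hg : IsLaurent g G) :
    IsLaurent (fun m n => f m n + g m n) (fun l γ => F l γ + G l γ) where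
  finite := (hf.finite.union hg.finite).subset (Function.support_add _ _)
  eval l γ hl hγ := by
    rw [hf.eval l γ hl hγ, hg.eval l γ hl hγ,
      ← finsum_add_distrib (finite_mul hf.finite l γ) (finite_mul hg.finite l γ)]
    simp only [mul_add]

theorem const_mul (hf : IsLaurent f F) (c : ℂ) :
    IsLaurent (fun m n => c * f m n) (fun l γ => c * F l γ) where
  finite := hf.finite.subset fun p hp h => hp (by simp only at h ⊢; rw [h, mul_zero])
  eval l γ hl hγ := by
    rw [hf.eval l γ hl hγ, mul_finsum]
    exact finsum_congr fun p => by ring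

theorem sub (hf : IsLaurent f F) (hg : IsLaurent g G) :
    IsLaurent (fun m n => f m n - g m n) (fun l γ => F l γ - G l γ) :=
  (hf.add (hg.const_mul (-1))).congr (fun _ _ => by ring) (fun _ _ _ _ => by ring)

/-- Multiplication by the monomial `λ^a γ^b` shifts the coefficients. -/
theorem shift (hf : IsLaurent f F) (a b : ℤ) :
    IsLaurent (fun m n => f (m - a) (n - b)) (fun l γ => l ^ a * γ ^ b * F l γ) where
  finite := hf.finite.preimage (f := (Equiv.subRight a).prodCongr (Equiv.subRight b))
    (Equiv.injective _).injOn
  eval l γ hl hγ := by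
    rw [hf.eval l γ hl hγ, mul_finsum,
      ← finsum_comp_equiv ((Equiv.subRight a).prodCongr (Equiv.subRight b))]
    refine finsum_congr fun p => ?_
    simp only [Equiv.prodCongr_apply, Prod.map, Equiv.subRight_apply, zpow_sub₀ hl, zpow_sub₀ hγ]
    field_simp

/-- The inversion `(λ, γ) ↦ (λ⁻¹, γ⁻¹)` followed by multiplication by `λ^a γ^b` reflects the
coefficients. -/
theorem reflect (hf : IsLaurent f F) (a b : ℤ) :
    IsLaurent (fun m n => f (a - m) (b - n)) (fun l γ => l ^ a * γ ^ b * F l⁻¹ γ⁻¹) where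
  finite := hf.finite.preimage (f := (Equiv.subLeft a).prodCongr (Equiv.subLeft b))
    (Equiv.injective _).injOn
  eval l γ hl hγ := by
    rw [hf.eval _ _ (inv_ne_zero hl) (inv_ne_zero hγ),
      mul_finsum,
      ← finsum_comp_equiv ((Equiv.subLeft a).prodCongr (Equiv.subLeft b))]
    refine finsum_congr fun p => ?_
    simp only [Equiv.prodCongr_apply, Prod.map, Equiv.subLeft_apply, inv_zpow, zpow_sub₀ hl,
      zpow_sub₀ hγ]
    field_simp

end IsLaurent

/-- The character `(λ, γ) ↦ λ^m γ^n` of `ℂˣ × ℂˣ`, for `p = (m, n)`. -/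
noncomputable def monomialChar (p : ℤ × ℤ) : ℂˣ × ℂˣ →* ℂ where
  toFun u := (u.1 : ℂ) ^ p.1 * (u.2 : ℂ) ^ p.2
  map_one' := by simp
  map_mul' u v := by
    simp only [Prod.fst_mul, Prod.snd_mul, Units.val_mul, mul_zpow]
    ring

theorem monomialChar_injective : Function.Injective monomialChar := by
  have two_inj : ∀ m n : ℤ, (2 : ℂ) ^ m = 2 ^ n → m = n := fun m n h => by
    have h' : ((2 : ℝ) : ℂ) ^ m = ((2 : ℝ) : ℂ) ^ n := by simpa using h
    exact zpow_right_injective₀ (by norm_num) (by norm_num)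
      (by exact_mod_cast h' : (2 : ℝ) ^ m = 2 ^ n)
  intro p r h
  have h1 := DFunLike.congr_fun h (Units.mk0 2 two_ne_zero, 1)
  have h2 := DFunLike.congr_fun h (1, Units.mk0 2 two_ne_zero)
  simp only [monomialChar, MonoidHom.coe_mk, OneHom.coe_mk, Units.val_mk0, Units.val_one,
    one_zpow, mul_one, one_mul] at h1 h2
  exact Prod.ext (two_inj _ _ h1) (two_inj _ _ h2)

/-- A Laurent polynomial vanishes on `(ℂ \ {0})²` iff its coefficients do. -/
theorem IsLaurent.eq_zero_iff {f : ℤ → ℤ → ℂ} {F : ℂ → ℂ → ℂ} (h : IsLaurent f F) :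
    (∀ l γ : ℂ, l ≠ 0 → γ ≠ 0 → F l γ = 0) ↔ ∀ m n, f m n = 0 := by
  constructor
  · intro hF
    have li := (linearIndependent_monoidHom (ℂˣ × ℂˣ) ℂ).comp _ monomialChar_injective
    have key := linearIndependent_iff'.1 li h.finite.toFinset (fun p => f p.1 p.2) (by
      ext u
      have hu := hF u.1 u.2 u.1.ne_zero u.2.ne_zero
      rw [h.eval _ _ u.1.ne_zero u.2.ne_zero, finsum_eq_sum_of_support_subset
        (s := h.finite.toFinset) _ (by
          intro p hp
          simp only [Set.Finite.coe_toFinset]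
          exact fun h0 => hp (by simp only at h0 ⊢; rw [h0, mul_zero]))] at hu
      simp only [Finset.sum_apply, Pi.smul_apply, Function.comp_apply, smul_eq_mul,
        Pi.zero_apply]
      rw [← hu]
      exact Finset.sum_congr rfl fun p _ => mul_comm _ _)
    intro m n
    by_contra hmn
    exact hmn (key (m, n) (by simpa using hmn))
  · intro hf l γ hl hγ
    simp [h.eval l γ hl hγ, hf]

/-- The scalar Laurent polynomial with coefficients `f`. -/
noncomputable def laurentEval (f : ℤ → ℤ → ℂ) (l γ : ℂ) : ℂ :=
  ∑ᶠ p : ℤ × ℤ, (l ^ p.1 * γ ^ p.2) * f p.1 p.2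

theorem xiMat_eq {ω σ τ : ℤ → ℤ → ℂ}
    (hω : (Function.support fun p : ℤ × ℤ => ω p.1 p.2).Finite)
    (hσ : (Function.support fun p : ℤ × ℤ => σ p.1 p.2).Finite)
    (hτ : (Function.support fun p : ℤ × ℤ => τ p.1 p.2).Finite) (l γ : ℂ) :
    xiMat ω σ τ l γ = !![laurentEval ω l γ, laurentEval σ l γ;
      laurentEval τ l γ, -laurentEval ω l γ] := by
  have hfin : (Function.support fun p : ℤ × ℤ => (l ^ p.1 * γ ^ p.2) •
      !![ω p.1 p.2, σ p.1 p.2; τ p.1 p.2, -ω p.1 p.2]).Finite := by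
    refine ((hω.union hσ).union hτ).subset fun p hp => ?_
    by_contra hn
    simp only [Set.mem_union, Function.mem_support, not_or, not_not] at hn
    refine hp ?_
    simp only [hn.1.1, hn.1.2, hn.2]
    ext i j
    fin_cases i <;> fin_cases j <;> simp
  have entry : ∀ i j, xiMat ω σ τ l γ i j = ∑ᶠ p : ℤ × ℤ, ((l ^ p.1 * γ ^ p.2) •
      !![ω p.1 p.2, σ p.1 p.2; τ p.1 p.2, -ω p.1 p.2]) i j := fun i j =>
    AddMonoidHom.map_finsum (Matrix.entryAddMonoidHom ℂ i j) hfin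
  ext i j
  rw [entry]
  fin_cases i <;> fin_cases j <;> simp [laurentEval, finsum_neg_distrib]

section Coefficients

variable (q : ℤ) (A B : ℝ) {ω σ τ : ℤ → ℤ → ℂ} {W S T : ℂ → ℂ → ℂ}

/-- `A₁^q` gives the coefficients of the `(0,0)` entry of the difference of the two sides. -/
theorem isLaurent_A1 (hω : IsLaurent ω W) (hσ : IsLaurent σ S) (hτ : IsLaurent τ T) :
    IsLaurent (A1 q A B ω σ τ) fun l γ =>
      (4 * (A : ℂ) * γ - 4 * (B : ℂ) * l) * W l γ + (l / γ - γ / l) * T l γ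
        - l ^ q * γ ^ (-q) * (W l⁻¹ γ⁻¹ * (4 * (A : ℂ) * γ - 4 * (B : ℂ) * l)
          + S l⁻¹ γ⁻¹ * (l / γ - γ / l)) := by
  refine ((((((((hτ.shift 1 (-1)).sub ((hω.shift 1 0).const_mul (4 * (B : ℂ)))).add
    ((hω.shift 0 1).const_mul (4 * (A : ℂ)))).sub (hτ.shift (-1) 1)).add
    (hσ.reflect (q - 1) (-q + 1))).sub ((hω.reflect q (-q + 1)).const_mul (4 * (A : ℂ)))).add
    ((hω.reflect (q + 1) (-q)).const_mul (4 * (B : ℂ)))).sub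
    (hσ.reflect (q + 1) (-q - 1))).congr (fun m n => ?_) (fun l γ hl hγ => ?_)
  · simp only [A1]
    ring_nf
  · simp only [zpow_add₀ hl, zpow_add₀ hγ, zpow_sub₀ hl, zpow_sub₀ hγ, zpow_one, zpow_neg,
      zpow_zero]
    field_simp
    ring

/-- `A₂^q` gives the coefficients of the `(0,1)` entry of the difference of the two sides. -/
theorem isLaurent_A2 (hω : IsLaurent ω W) (hσ : IsLaurent σ S) :
    IsLaurent (A2 q A B ω σ τ) fun l γ =>
      (4 * (A : ℂ) * γ - 4 * (B : ℂ) * l) * S l γ - (l / γ - γ / l) * W l γ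
        - l ^ q * γ ^ (-q) * (W l⁻¹ γ⁻¹ * (l / γ - γ / l)
          + S l⁻¹ γ⁻¹ * (4 * (A : ℂ) / γ - 4 * (B : ℂ) / l)) := by
  refine (((((((((hω.shift 1 (-1)).const_mul (-1)).sub
    ((hσ.shift 1 0).const_mul (4 * (B : ℂ)))).add
    ((hσ.shift 0 1).const_mul (4 * (A : ℂ)))).add (hω.shift (-1) 1)).add
    (hω.reflect (q - 1) (-q + 1))).add ((hσ.reflect (q - 1) (-q)).const_mul (4 * (B : ℂ)))).sub
    ((hσ.reflect q (-q - 1)).const_mul (4 * (A : ℂ)))).sub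
    (hω.reflect (q + 1) (-q - 1))).congr (fun m n => ?_) (fun l γ hl hγ => ?_)
  · simp only [A2]
    ring_nf
  · simp only [zpow_add₀ hl, zpow_add₀ hγ, zpow_sub₀ hl, zpow_sub₀ hγ, zpow_one, zpow_neg,
      zpow_zero]
    field_simp
    ring

/-- `A₃^q` gives the coefficients of the `(1,0)` entry of the difference of the two sides. -/
theorem isLaurent_A3 (hω : IsLaurent ω W) (hτ : IsLaurent τ T) :
    IsLaurent (A3 q A B ω σ τ) fun l γ =>
      (l / γ - γ / l) * W l γ + (4 * (A : ℂ) / γ - 4 * (B : ℂ) / l) * T l γ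
        - l ^ q * γ ^ (-q) * (T l⁻¹ γ⁻¹ * (4 * (A : ℂ) * γ - 4 * (B : ℂ) * l)
          - W l⁻¹ γ⁻¹ * (l / γ - γ / l)) := by
  refine ((((((((hω.shift 1 (-1)).add ((hτ.shift 0 (-1)).const_mul (4 * (A : ℂ)))).sub
    ((hτ.shift (-1) 0).const_mul (4 * (B : ℂ)))).sub (hω.shift (-1) 1)).sub
    (hω.reflect (q - 1) (-q + 1))).sub ((hτ.reflect q (-q + 1)).const_mul (4 * (A : ℂ)))).add
    ((hτ.reflect (q + 1) (-q)).const_mul (4 * (B : ℂ)))).add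
    (hω.reflect (q + 1) (-q - 1))).congr (fun m n => ?_) (fun l γ hl hγ => ?_)
  · simp only [A3]
    ring_nf
  · simp only [zpow_add₀ hl, zpow_add₀ hγ, zpow_sub₀ hl, zpow_sub₀ hγ, zpow_one, zpow_neg,
      zpow_zero]
    field_simp
    ring

end Coefficients

theorem stmt5 (q : ℤ) (hq : 0 ≤ q) (A B : ℝ) (ω σ τ : ℤ → ℤ → ℂ)
    (hω : (Function.support fun p : ℤ × ℤ => ω p.1 p.2).Finite)
    (hσ : (Function.support fun p : ℤ × ℤ => σ p.1 p.2).Finite)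
    (hτ : (Function.support fun p : ℤ × ℤ => τ p.1 p.2).Finite) :
    (∀ l γ : ℂ, l ≠ 0 → γ ≠ 0 →
        Kh A B l γ * xiMat ω σ τ l γ
          = (l ^ q * γ ^ (-q)) • (xiMat ω σ τ l⁻¹ γ⁻¹ * Kh A B l γ)) ↔
    (∀ m n : ℤ, A1 q A B ω σ τ m n = 0 ∧ A2 q A B ω σ τ m n = 0
        ∧ A3 q A B ω σ τ m n = 0) := by
  have lω : IsLaurent ω (laurentEval ω) := ⟨hω, fun _ _ _ _ => rfl⟩
  have lσ : IsLaurent σ (laurentEval σ) := ⟨hσ, fun _ _ _ _ => rfl⟩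
  have lτ : IsLaurent τ (laurentEval τ) := ⟨hτ, fun _ _ _ _ => rfl⟩
  have e1 := (isLaurent_A1 q A B lω lσ lτ).eq_zero_iff
  have e2 := (isLaurent_A2 (τ := τ) q A B lω lσ).eq_zero_iff
  have e3 := (isLaurent_A3 (σ := σ) q A B lω lτ).eq_zero_iff
  simp only [forall_and, ← e1, ← e2, ← e3, xiMat_eq hω hσ hτ]
  constructor
  · intro h
    refine ⟨fun l γ hl hγ => ?_, fun l γ hl hγ => ?_, fun l γ hl hγ => ?_⟩
    · have := congr_fun₂ (h l γ hl hγ) 0 0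
      simp [Kh, Matrix.mul_apply, Fin.sum_univ_two, -mul_eq_mul_left_iff] at this
      rw [zpow_neg]
      linear_combination this
    · have := congr_fun₂ (h l γ hl hγ) 0 1
      simp [Kh, Matrix.mul_apply, Fin.sum_univ_two, -mul_eq_mul_left_iff] at this
      rw [zpow_neg]
      linear_combination this
    · have := congr_fun₂ (h l γ hl hγ) 1 0
      simp [Kh, Matrix.mul_apply, Fin.sum_univ_two, -mul_eq_mul_left_iff] at this
      rw [zpow_neg]
      linear_combination this
  · rintro ⟨h1, h2, h3⟩ l γ hl hγ
    ext i j
    fin_cases i <;> fin_cases j <;>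
      simp [Kh, Matrix.mul_apply, Fin.sum_univ_two, -mul_eq_mul_left_iff]
    · have := h1 l γ hl hγ
      rw [zpow_neg] at this
      linear_combination this
    · have := h2 l γ hl hγ
      rw [zpow_neg] at this
      linear_combination this
    · have := h3 l γ hl hγ
      rw [zpow_neg] at this
      linear_combination this
    -- The last entry is the first one at the inverse point, up to the factor `l ^ q * γ ^ (-q)`.
    · have := h1 l⁻¹ γ⁻¹ (inv_ne_zero hl) (inv_ne_zero hγ)
      have hlq : l ^ q ≠ 0 := zpow_ne_zero q hl
      have hγq : γ ^ q ≠ 0 := zpow_ne_zero q hγ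
      simp only [inv_inv, zpow_neg, inv_zpow] at this
      generalize l ^ q = x at *
      generalize γ ^ q = y at *
      field_simp at this ⊢
      linear_combination this
end

section
/- A₁^q(m,n) = 0 for all (m,n) ∈ ℤ × ℤ if and only if B₁^q(m,n) = 0 and B₂^q(m,n) = 0 for all (m,n) ∈ ℤ × ℤ. -/
/-- The quantity B₁^q(m,n). -/
noncomputable def B1 (q : ℤ) (A B : ℝ) (ω σ τ : ℤ → ℤ → ℂ) (m n : ℤ) : ℂ :=
  -σ (m-1) n + 4*(A:ℂ)*ω m n - τ (m+1) n
  + τ (q-m+1) (-q-n) - 4*(A:ℂ)*ω (q-m) (-q-n) + σ (q-m-1) (-q-n)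

/-- The quantity B₂^q(m,n). -/
noncomputable def B2 (q : ℤ) (A B : ℝ) (ω σ τ : ℤ → ℤ → ℂ) (m n : ℤ) : ℂ :=
  τ m (n+1) - 4*(B:ℂ)*ω m n + σ m (n-1)
  - τ (q-m) (-q-n+1) + 4*(B:ℂ)*ω (q-m) (-q-n) - σ (q-m) (-q-n-1)

theorem A1_eq (q : ℤ) (A B : ℝ) (ω σ τ : ℤ → ℤ → ℂ) (m n : ℤ) :
    A1 q A B ω σ τ m n = B1 q A B ω σ τ m (n-1) + B2 q A B ω σ τ (m-1) n := by
  unfold A1 B1 B2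
  rw [show n - 1 = n + -1 by ring, show -q - (n + -1) = -q - n + 1 by ring,
    show q - (m - 1) = q - m + 1 by ring]
  ring

theorem B1_reflect (q : ℤ) (A B : ℝ) (ω σ τ : ℤ → ℤ → ℂ) (m n : ℤ) :
    B1 q A B ω σ τ (q-m) (-q-n) = -B1 q A B ω σ τ m n := by
  unfold B1
  rw [show q - (q - m) = m by ring, show -q - (-q - n) = n by ring]
  ring

theorem B2_reflect (q : ℤ) (A B : ℝ) (ω σ τ : ℤ → ℤ → ℂ) (m n : ℤ) :
    B2 q A B ω σ τ (q-m) (-q-n) = -B2 q A B ω σ τ m n := by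
  unfold B2
  rw [show q - (q - m) = m by ring, show -q - (-q - n) = n by ring]
  ring

theorem exists_bound_of_finite_support (f : ℤ → ℤ → ℂ)
    (hf : (Function.support fun p : ℤ × ℤ => f p.1 p.2).Finite) :
    ∃ N : ℤ, ∀ m n : ℤ, N < |m| → f m n = 0 := by
  obtain ⟨N, hN⟩ := (hf.image fun p : ℤ × ℤ => |p.1|).bddAbove
  refine ⟨N, fun m n h => ?_⟩
  by_contra hne
  exact absurd (hN ⟨(m, n), hne, rfl⟩) (not_le.mpr h)

theorem B1_shift (q : ℤ) (A B : ℝ) (ω σ τ : ℤ → ℤ → ℂ)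
    (h : ∀ m n : ℤ, A1 q A B ω σ τ m n = 0) (m n : ℤ) :
    B1 q A B ω σ τ m n = B1 q A B ω σ τ (m-2) (n+2) := by
  have h1 := (A1_eq q A B ω σ τ m (n+1)).symm.trans (h _ _)
  have h2 := B2_reflect q A B ω σ τ (m-1) (n+1)
  have h3 := (A1_eq q A B ω σ τ (q-(m-2)) (-q-(n+1))).symm.trans (h _ _)
  have h4 := B1_reflect q A B ω σ τ (m-2) (n+2)
  rw [show n + 1 - 1 = n by ring] at h1
  rw [show -q - (n+1) - 1 = -q - (n+2) by ring,
    show q - (m-2) - 1 = q - (m-1) by ring] at h3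
  linear_combination h1 - h2 + h3 - h4

theorem B1_shift_nat (q : ℤ) (A B : ℝ) (ω σ τ : ℤ → ℤ → ℂ)
    (h : ∀ m n : ℤ, A1 q A B ω σ τ m n = 0) (m n : ℤ) (k : ℕ) :
    B1 q A B ω σ τ m n = B1 q A B ω σ τ (m-2*k) (n+2*k) := by
  induction k with
  | zero => simp
  | succ k ih =>
    rw [ih, B1_shift q A B ω σ τ h]
    congr 1 <;> push_cast <;> ring

theorem stmt6 (q : ℤ) (hq : 0 ≤ q) (A B : ℝ) (ω σ τ : ℤ → ℤ → ℂ)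
    (hω : (Function.support fun p : ℤ × ℤ => ω p.1 p.2).Finite)
    (hσ : (Function.support fun p : ℤ × ℤ => σ p.1 p.2).Finite)
    (hτ : (Function.support fun p : ℤ × ℤ => τ p.1 p.2).Finite) :
    (∀ m n : ℤ, A1 q A B ω σ τ m n = 0) ↔
    (∀ m n : ℤ, B1 q A B ω σ τ m n = 0 ∧ B2 q A B ω σ τ m n = 0) := by
  constructor
  · intro h
    obtain ⟨N₁, h₁⟩ := exists_bound_of_finite_support ω hω
    obtain ⟨N₂, h₂⟩ := exists_bound_of_finite_support σ hσ
    obtain ⟨N₃, h₃⟩ := exists_bound_of_finite_support τ hτ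
    have hB1 : ∀ m n : ℤ, B1 q A B ω σ τ m n = 0 := by
      intro m n
      -- This shift moves every first coordinate occurring in `B1`, reflected or not, beyond
      -- the bounds `N₁`, `N₂`, `N₃`.
      rw [B1_shift_nat q A B ω σ τ h m n
        (m.natAbs + q.natAbs + N₁.natAbs + N₂.natAbs + N₃.natAbs + 2)]
      unfold B1
      rw [h₁, h₁, h₂, h₂, h₃, h₃]
      · ring
      all_goals
        rw [lt_abs]
        omega
    refine fun m n => ⟨hB1 m n, ?_⟩
    have h1 := A1_eq q A B ω σ τ (m+1) n
    rw [h, hB1, zero_add, add_sub_cancel_right] at h1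
    exact h1.symm
  · intro h m n
    rw [A1_eq, (h _ _).1, (h _ _).2, add_zero]
end

section
/- For each i ∈ {1, 2}: if B_i^q(m,n) = 0 for all (m,n) ∈ ℤ × ℤ, then, for every integer k ≥ 0, the expression B_i^0 formed from the transformed families ω', σ', τ' (i.e. with ω, σ, τ replaced by ω', σ', τ' and q replaced by 0) vanishes at every (m,n) ∈ ℤ × ℤ. -/
/-- Transformed family ω'. -/
noncomputable def omegaT (q k : ℤ) (ω : ℤ → ℤ → ℂ) (m n : ℤ) : ℂ :=
  if n = -m then
    (if m < 0 then ω (m+k) (-m-k)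
     else if 0 < m then ω (m+q-k) (-m-q+k)
     else (ω k (-k) + ω (q-k) (k-q)) / 2)
  else 0

/-- Transformed family τ'. -/
noncomputable def tauT (q k : ℤ) (τ : ℤ → ℤ → ℂ) (m n : ℤ) : ℂ :=
  if m + n = 1 then (if m ≤ 0 then τ (m+k) (n-k) else τ (m+q-k) (n-q+k)) else 0

/-- Transformed family σ'. -/
noncomputable def sigmaT (q k : ℤ) (σ : ℤ → ℤ → ℂ) (m n : ℤ) : ℂ :=
  if m + n = -1 then (if m < 0 then σ (m+k) (n-k) else σ (m+q-k) (n-q+k)) else 0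

theorem B1_zero_neg (A B : ℝ) (ω σ τ : ℤ → ℤ → ℂ) (m n : ℤ) :
    B1 0 A B ω σ τ (-m) (-n) = -B1 0 A B ω σ τ m n := by
  simp only [B1, zero_sub, neg_neg, neg_zero]
  ring

theorem B1_transform_of_ne (q k : ℤ) (A B : ℝ) (ω σ τ : ℤ → ℤ → ℂ) {m n : ℤ} (h : n ≠ -m) :
    B1 0 A B (omegaT q k ω) (sigmaT q k σ) (tauT q k τ) m n = 0 := by
  simp only [B1, omegaT, sigmaT, tauT]
  repeat rw [if_neg (by lia)]
  ring

/-- On the negative half of the antidiagonal the transformation is a translation by `(k, -k)`. -/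
theorem B1_transform_of_neg (q k : ℤ) (A B : ℝ) (ω σ τ : ℤ → ℤ → ℂ) {m : ℤ} (h : m < 0) :
    B1 0 A B (omegaT q k ω) (sigmaT q k σ) (tauT q k τ) m (-m) =
      B1 q A B ω σ τ (m + k) (-m - k) := by
  simp only [B1, omegaT, sigmaT, tauT]
  repeat first | rw [if_pos (by lia)] | rw [if_neg (by lia)]
  ring_nf

theorem B2_zero_neg (A B : ℝ) (ω σ τ : ℤ → ℤ → ℂ) (m n : ℤ) :
    B2 0 A B ω σ τ (-m) (-n) = -B2 0 A B ω σ τ m n := by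
  simp only [B2, zero_sub, neg_neg, neg_zero]
  ring

theorem B2_transform_of_ne (q k : ℤ) (A B : ℝ) (ω σ τ : ℤ → ℤ → ℂ) {m n : ℤ} (h : n ≠ -m) :
    B2 0 A B (omegaT q k ω) (sigmaT q k σ) (tauT q k τ) m n = 0 := by
  simp only [B2, omegaT, sigmaT, tauT]
  repeat rw [if_neg (by lia)]
  ring

/-- On the negative half of the antidiagonal the transformation is a translation by `(k, -k)`. -/
theorem B2_transform_of_neg (q k : ℤ) (A B : ℝ) (ω σ τ : ℤ → ℤ → ℂ) {m : ℤ} (h : m < 0) :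
    B2 0 A B (omegaT q k ω) (sigmaT q k σ) (tauT q k τ) m (-m) =
      B2 q A B ω σ τ (m + k) (-m - k) := by
  simp only [B2, omegaT, sigmaT, tauT]
  repeat first | rw [if_pos (by lia)] | rw [if_neg (by lia)]
  ring_nf

/-- A function that is odd on the lattice, vanishes off the antidiagonal and vanishes on the negative
half of it is zero. -/
theorem eq_zero_of_odd {f : ℤ → ℤ → ℂ} (hodd : ∀ m n, f (-m) (-n) = -f m n)
    (hoff : ∀ m n, n ≠ -m → f m n = 0) (hneg : ∀ m, m < 0 → f m (-m) = 0) (m n : ℤ) :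
    f m n = 0 := by
  by_cases h : n = -m
  · subst h
    rcases lt_trichotomy m 0 with hm | rfl | hm
    · exact hneg m hm
    · have h0 := hodd 0 0
      simp only [neg_zero] at h0 ⊢
      exact self_eq_neg.mp h0
    · have h1 := hodd m (-m)
      rw [hneg (-m) (by lia)] at h1
      exact neg_eq_zero.mp h1.symm
  · exact hoff m n h

theorem stmt7 (q : ℤ) (hq : 0 ≤ q) (A B : ℝ) (ω σ τ : ℤ → ℤ → ℂ)
    (hω : (Function.support fun p : ℤ × ℤ => ω p.1 p.2).Finite)
    (hσ : (Function.support fun p : ℤ × ℤ => σ p.1 p.2).Finite)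
    (hτ : (Function.support fun p : ℤ × ℤ => τ p.1 p.2).Finite)
    (k : ℤ) (hk : 0 ≤ k) :
    ((∀ m n : ℤ, B1 q A B ω σ τ m n = 0) →
      ∀ m n : ℤ, B1 0 A B (omegaT q k ω) (sigmaT q k σ) (tauT q k τ) m n = 0) ∧
    ((∀ m n : ℤ, B2 q A B ω σ τ m n = 0) →
      ∀ m n : ℤ, B2 0 A B (omegaT q k ω) (sigmaT q k σ) (tauT q k τ) m n = 0) := by
  exact ⟨fun H => eq_zero_of_odd (B1_zero_neg A B _ _ _)
      (fun _ _ h => B1_transform_of_ne q k A B ω σ τ h)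
      (fun _ h => (B1_transform_of_neg q k A B ω σ τ h).trans (H _ _)),
    fun H => eq_zero_of_odd (B2_zero_neg A B _ _ _)
      (fun _ _ h => B2_transform_of_ne q k A B ω σ τ h)
      (fun _ h => (B2_transform_of_neg q k A B ω σ τ h).trans (H _ _))⟩
end

section
/- For each i ∈ {2, 3}: if A_i^q(m,n) = 0 for all (m,n) ∈ ℤ × ℤ, then, for every integer k ≥ 0, the expression A_i^0 formed from the transformed families ω', σ', τ' (i.e. with ω, σ, τ replaced by ω', σ', τ' and q replaced by 0) vanishes at every (m,n) ∈ ℤ × ℤ. -/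
/-- The half-expression `w (m + 1) - w (m - 1) + u m` on the line `m + n = 0`. -/
noncomputable def lineG (w u : ℤ → ℂ) (m : ℤ) : ℂ := w (m+1) - w (m-1) + u m

/-- Translating the two half-lines by `k` and `q - k` turns symmetry of `lineG` about `q / 2` into
symmetry about `0`, provided the value at `0` is the mean of the two translates. -/
theorem lineG_even (q k : ℤ) (w u w' u' : ℤ → ℂ)
    (wneg : ∀ m < 0, w' m = w (m+k)) (wpos : ∀ m > 0, w' m = w (m+q-k))
    (wzero : w' 0 = (w k + w (q-k)) / 2)
    (uneg : ∀ m < 0, u' m = u (m+k)) (upos : ∀ m > 0, u' m = u (m+q-k))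
    (h : ∀ m, lineG w u m = lineG w u (q-m)) (m : ℤ) :
    lineG w' u' m = lineG w' u' (-m) := by
  have key : ∀ m > 0, lineG w' u' m = lineG w' u' (-m) := by
    intro m hm
    have hs := h (m+q-k)
    unfold lineG at hs ⊢
    rw [upos m hm, uneg (-m) (by lia), wpos (m+1) (by lia), wneg (-m-1) (by lia)]
    rw [show q - (m+q-k) = -m+k by ring] at hs
    rw [show m+1+q-k = m+q-k+1 by ring, show -m-1+k = -m+k-1 by ring]
    obtain rfl | hm1 : m = 1 ∨ 1 < m := by lia
    · rw [show (1:ℤ)-1 = 0 by ring, show (-1:ℤ)+1 = 0 by ring, wzero]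
      rw [show 1+q-k-1 = q-k by ring, show -1+k+1 = k by ring] at hs
      linear_combination hs
    · rw [wpos (m-1) (by lia), wneg (-m+1) (by lia),
        show m-1+q-k = m+q-k-1 by ring, show -m+1+k = -m+k+1 by ring]
      exact hs
  rcases lt_trichotomy m 0 with hm | rfl | hm
  · simpa using (key (-m) (by lia)).symm
  · simp
  · exact key m hm

theorem A2_line (q : ℤ) (A B : ℝ) (ω σ τ : ℤ → ℤ → ℂ) (m : ℤ) :
    A2 q A B ω σ τ m (-m) =
      lineG (fun j => ω j (-j)) (fun j => 4*(A:ℂ)*σ j (-j-1) - 4*(B:ℂ)*σ (j-1) (-j)) m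
      - lineG (fun j => ω j (-j)) (fun j => 4*(A:ℂ)*σ j (-j-1) - 4*(B:ℂ)*σ (j-1) (-j)) (q-m) := by
  unfold A2 lineG
  ring_nf

theorem A3_line (q : ℤ) (A B : ℝ) (ω σ τ : ℤ → ℤ → ℂ) (m : ℤ) :
    A3 q A B ω σ τ m (-m) =
      lineG (fun j => ω j (-j)) (fun j => 4*(B:ℂ)*τ (j+1) (-j) - 4*(A:ℂ)*τ j (-j+1)) (q-m)
      - lineG (fun j => ω j (-j)) (fun j => 4*(B:ℂ)*τ (j+1) (-j) - 4*(A:ℂ)*τ j (-j+1)) m := by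
  unfold A3 lineG
  ring_nf

theorem omegaT_neg (q k : ℤ) (ω : ℤ → ℤ → ℂ) (m : ℤ) (hm : m < 0) :
    omegaT q k ω m (-m) = ω (m+k) (-(m+k)) := by
  rw [omegaT, if_pos rfl, if_pos hm, neg_add']

theorem omegaT_pos (q k : ℤ) (ω : ℤ → ℤ → ℂ) (m : ℤ) (hm : m > 0) :
    omegaT q k ω m (-m) = ω (m+q-k) (-(m+q-k)) := by
  rw [omegaT, if_pos rfl, if_neg (by lia), if_pos hm, show -(m+q-k) = -m-q+k by ring]

theorem omegaT_zero (q k : ℤ) (ω : ℤ → ℤ → ℂ) :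
    omegaT q k ω 0 (-0) = (ω k (-k) + ω (q-k) (-(q-k))) / 2 := by
  simp [omegaT]

theorem stmt8 (q : ℤ) (hq : 0 ≤ q) (A B : ℝ) (ω σ τ : ℤ → ℤ → ℂ)
    (hω : (Function.support fun p : ℤ × ℤ => ω p.1 p.2).Finite)
    (hσ : (Function.support fun p : ℤ × ℤ => σ p.1 p.2).Finite)
    (hτ : (Function.support fun p : ℤ × ℤ => τ p.1 p.2).Finite)
    (k : ℤ) (hk : 0 ≤ k) :
    ((∀ m n : ℤ, A2 q A B ω σ τ m n = 0) →
      ∀ m n : ℤ, A2 0 A B (omegaT q k ω) (sigmaT q k σ) (tauT q k τ) m n = 0) ∧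
    ((∀ m n : ℤ, A3 q A B ω σ τ m n = 0) →
      ∀ m n : ℤ, A3 0 A B (omegaT q k ω) (sigmaT q k σ) (tauT q k τ) m n = 0) := by
  constructor
  · intro h m n
    by_cases hn : n = -m
    · subst hn
      rw [A2_line, sub_eq_zero, zero_sub]
      refine lineG_even q k (fun j => ω j (-j))
        (fun j => 4*(A:ℂ)*σ j (-j-1) - 4*(B:ℂ)*σ (j-1) (-j)) _ _
        (omegaT_neg q k ω) (omegaT_pos q k ω) (omegaT_zero q k ω) ?_ ?_
        (fun j => sub_eq_zero.mp ((A2_line q A B ω σ τ j).symm.trans (h _ _))) m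
      · intro j hj
        simp only [sigmaT]
        rw [if_pos (by ring), if_pos hj, if_pos (by ring), if_pos (by lia)]
        ring_nf
      · intro j hj
        simp only [sigmaT]
        rw [if_pos (by ring), if_neg (by lia), if_pos (by ring), if_neg (by lia)]
        ring_nf
    · unfold A2 omegaT sigmaT
      repeat rw [if_neg (by lia)]
      ring
  · intro h m n
    by_cases hn : n = -m
    · subst hn
      rw [A3_line, sub_eq_zero, zero_sub]
      refine (lineG_even q k (fun j => ω j (-j))
        (fun j => 4*(B:ℂ)*τ (j+1) (-j) - 4*(A:ℂ)*τ j (-j+1)) _ _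
        (omegaT_neg q k ω) (omegaT_pos q k ω) (omegaT_zero q k ω) ?_ ?_
        (fun j => (sub_eq_zero.mp ((A3_line q A B ω σ τ j).symm.trans (h _ _))).symm) m).symm
      · intro j hj
        simp only [tauT]
        rw [if_pos (by ring), if_pos (by lia), if_pos (by ring), if_pos (by lia)]
        ring_nf
      · intro j hj
        simp only [tauT]
        rw [if_pos (by ring), if_neg (by lia), if_pos (by ring), if_neg (by lia)]
        ring_nf
    · unfold A3 omegaT tauT
      repeat rw [if_neg (by lia)]
      ring
end

section
/- If A₁^q(m,n) = 0, A₂^q(m,n) = 0 and A₃^q(m,n) = 0 for all (m,n) ∈ ℤ × ℤ, then, for every integer k ≥ 0, the expressions A₁^0, A₂^0 and A₃^0 formed from the transformed families ω', σ', τ' (i.e. with ω, σ, τ replaced by ω', σ', τ' and q replaced by 0) vanish at every (m,n) ∈ ℤ × ℤ. (In the language of the paper: if a potential satisfies the q-Sklyanin condition, then its projection Θ_k^q satisfies the 0-Sklyanin condition.) -/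
/-- `A1 q` along the antidiagonal `m + n = 1`, in terms of the sequences
`w i = ω(i, -i)`, `s i = σ(i, -1 - i)`, `t i = τ(i, 1 - i)`. -/
noncomputable def E1 (q : ℤ) (A B : ℝ) (w s t : ℤ → ℂ) (m : ℤ) : ℂ :=
  t (m-1) - 4*(B:ℂ)*w (m-1) + 4*(A:ℂ)*w m - t (m+1)
  + s (q-m-1) - 4*(A:ℂ)*w (q-m) + 4*(B:ℂ)*w (q-m+1) - s (q-m+1)

/-- `A2 q` along the antidiagonal `m + n = 0`, in terms of the sequences
`w i = ω(i, -i)`, `s i = σ(i, -1 - i)`. -/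
noncomputable def E2 (q : ℤ) (A B : ℝ) (w s : ℤ → ℂ) (m : ℤ) : ℂ :=
  -w (m-1) - 4*(B:ℂ)*s (m-1) + 4*(A:ℂ)*s m + w (m+1)
  + w (q-m-1) + 4*(B:ℂ)*s (q-m-1) - 4*(A:ℂ)*s (q-m) - w (q-m+1)

/-- `A3 q` along the antidiagonal `m + n = 0`, in terms of the sequences
`w i = ω(i, -i)`, `t i = τ(i, 1 - i)`. -/
noncomputable def E3 (q : ℤ) (A B : ℝ) (w t : ℤ → ℂ) (m : ℤ) : ℂ :=
  w (m-1) + 4*(A:ℂ)*t m - 4*(B:ℂ)*t (m+1) - w (m+1)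
  - w (q-m-1) - 4*(A:ℂ)*t (q-m) + 4*(B:ℂ)*t (q-m+1) + w (q-m+1)

lemma A1_diag (q : ℤ) (A B : ℝ) (ω σ τ : ℤ → ℤ → ℂ) (m : ℤ) :
    A1 q A B ω σ τ m (1 - m)
      = E1 q A B (fun i => ω i (-i)) (fun i => σ i (-1-i)) (fun i => τ i (1-i)) m := by
  unfold A1 E1; ring_nf

lemma A2_diag (q : ℤ) (A B : ℝ) (ω σ τ : ℤ → ℤ → ℂ) (m : ℤ) :
    A2 q A B ω σ τ m (-m) = E2 q A B (fun i => ω i (-i)) (fun i => σ i (-1-i)) m := by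
  unfold A2 E2; ring_nf

lemma A3_diag (q : ℤ) (A B : ℝ) (ω σ τ : ℤ → ℤ → ℂ) (m : ℤ) :
    A3 q A B ω σ τ m (-m) = E3 q A B (fun i => ω i (-i)) (fun i => τ i (1-i)) m := by
  unfold A3 E3; ring_nf

/-- The sequence of `omegaT` on its antidiagonal. -/
noncomputable def wT (q k : ℤ) (w : ℤ → ℂ) (i : ℤ) : ℂ :=
  if i < 0 then w (i+k) else if 0 < i then w (i+q-k) else (w k + w (q-k)) / 2

/-- The sequence of `sigmaT` on its antidiagonal. -/
noncomputable def sT (q k : ℤ) (s : ℤ → ℂ) (i : ℤ) : ℂ :=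
  if i < 0 then s (i+k) else s (i+q-k)

/-- The sequence of `tauT` on its antidiagonal. -/
noncomputable def tT (q k : ℤ) (t : ℤ → ℂ) (i : ℤ) : ℂ :=
  if i ≤ 0 then t (i+k) else t (i+q-k)

lemma omegaT_diag (q k : ℤ) (ω : ℤ → ℤ → ℂ) :
    (fun i => omegaT q k ω i (-i)) = wT q k (fun i => ω i (-i)) := by
  funext i; simp only [omegaT, wT, if_true]; ring_nf

lemma sigmaT_diag (q k : ℤ) (σ : ℤ → ℤ → ℂ) :
    (fun i => sigmaT q k σ i (-1-i)) = sT q k (fun i => σ i (-1-i)) := by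
  funext i; simp only [sigmaT, sT]; rw [if_pos (by ring)]; ring_nf

lemma tauT_diag (q k : ℤ) (τ : ℤ → ℤ → ℂ) :
    (fun i => tauT q k τ i (1-i)) = tT q k (fun i => τ i (1-i)) := by
  funext i; simp only [tauT, tT]; rw [if_pos (by ring)]; ring_nf

lemma omegaT_off (q k : ℤ) (ω : ℤ → ℤ → ℂ) {m n : ℤ} (h : m + n ≠ 0) :
    omegaT q k ω m n = 0 := if_neg (by omega)

lemma sigmaT_off (q k : ℤ) (σ : ℤ → ℤ → ℂ) {m n : ℤ} (h : m + n ≠ -1) :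
    sigmaT q k σ m n = 0 := if_neg h

lemma tauT_off (q k : ℤ) (τ : ℤ → ℤ → ℂ) {m n : ℤ} (h : m + n ≠ 1) :
    tauT q k τ m n = 0 := if_neg h

lemma eventually_zero (f : ℤ → ℤ → ℂ)
    (hf : (Function.support fun p : ℤ × ℤ => f p.1 p.2).Finite) :
    ∃ N : ℤ, ∀ i j, N < |i| → f i j = 0 := by
  obtain ⟨N, hN⟩ := (hf.image fun p => |p.1|).bddAbove
  refine ⟨N, fun i j h => ?_⟩
  by_contra hne
  exact absurd (hN ⟨(i, j), hne, rfl⟩) (not_le.mpr h)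

/-- For an eventually vanishing solution of `E1`, the combination `v = t + s - 4 B w` is symmetric
about `q / 2`: its antisymmetric defect is 2-periodic and vanishes far out. -/
lemma v_symm (q : ℤ) (A B : ℝ) (w s t : ℤ → ℂ) (h : ∀ m, E1 q A B w s t m = 0)
    (N : ℤ) (hw : ∀ i, N < |i| → w i = 0) (hs : ∀ i, N < |i| → s i = 0)
    (ht : ∀ i, N < |i| → t i = 0) (j : ℤ) :
    t (j-1) + s (j-1) - 4*(B:ℂ)*w (j-1)
      = t (q-j+1) + s (q-j+1) - 4*(B:ℂ)*w (q-j+1) := by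
  set D : ℤ → ℂ := fun j => (t (j-1) + s (j-1) - 4*(B:ℂ)*w (j-1))
      - (t (q-j+1) + s (q-j+1) - 4*(B:ℂ)*w (q-j+1)) with hD
  have step (j : ℤ) : D j = D (j + 2) := by
    have h1 := h j
    have h2 := h (q - j)
    simp only [E1, hD] at *
    rw [show q - (q - j) = j by ring] at h2
    rw [show j + 2 - 1 = j + 1 by ring, show q - (j + 2) + 1 = q - j - 1 by ring]
    linear_combination h1 + h2
  have steps (n : ℕ) : D j = D (j + 2 * n) := by
    induction n with
    | zero => simp
    | succ n ih => rw [ih, step]; congr 1; push_cast; ring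
  have key : D j = 0 := by
    have a1 := le_abs_self N
    have a2 := abs_nonneg N
    have a3 := le_abs_self q
    have a4 := abs_nonneg q
    have a5 := neg_abs_le j
    have a6 := abs_nonneg j
    rw [steps (|N| + |q| + |j| + 1).toNat, Int.toNat_of_nonneg (by positivity)]
    have b1 : N < |j + 2 * (|N| + |q| + |j| + 1) - 1| := lt_abs.mpr (Or.inl (by omega))
    have b2 : N < |q - (j + 2 * (|N| + |q| + |j| + 1)) + 1| := lt_abs.mpr (Or.inr (by omega))
    simp only [hD, hw _ b1, hs _ b1, ht _ b1, hw _ b2, hs _ b2, ht _ b2]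
    ring
  exact sub_eq_zero.mp key

lemma E1_T (q k : ℤ) (A B : ℝ) (w s t : ℤ → ℂ) (h : ∀ m, E1 q A B w s t m = 0)
    (hv : ∀ j, t (j-1) + s (j-1) - 4*(B:ℂ)*w (j-1)
      = t (q-j+1) + s (q-j+1) - 4*(B:ℂ)*w (q-j+1)) (m : ℤ) :
    E1 0 A B (wT q k w) (sT q k s) (tT q k t) m = 0 := by
  rcases (by omega : m ≤ -1 ∨ m = 0 ∨ m = 1 ∨ 2 ≤ m) with hm | rfl | rfl | hm
  · rw [← h (m + k)]
    simp (disch := omega) only [E1, wT, sT, tT, if_pos, if_neg]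
    ring_nf
  · have := hv k
    norm_num [E1, wT, sT, tT]
    ring_nf at this ⊢
    linear_combination this
  · have h1 := h (k - 1)
    have h2 := hv (k - 1)
    norm_num [E1, wT, sT, tT] at h1 ⊢
    ring_nf at h1 h2 ⊢
    linear_combination h2 - h1
  · rw [← h (m + q - k)]
    simp (disch := omega) only [E1, wT, sT, tT, if_pos, if_neg]
    ring_nf

lemma E2_antisymm (q : ℤ) (A B : ℝ) (w s : ℤ → ℂ) (m : ℤ) :
    E2 q A B w s (q - m) = -E2 q A B w s m := by
  unfold E2; ring_nf

lemma E3_antisymm (q : ℤ) (A B : ℝ) (w t : ℤ → ℂ) (m : ℤ) :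
    E3 q A B w t (q - m) = -E3 q A B w t m := by
  unfold E3; ring_nf

lemma E2_T (q k : ℤ) (A B : ℝ) (w s : ℤ → ℂ) (h : ∀ m, E2 q A B w s m = 0) (m : ℤ) :
    E2 0 A B (wT q k w) (sT q k s) m = 0 := by
  have neg (m : ℤ) (hm : m < 0) : E2 0 A B (wT q k w) (sT q k s) m = 0 := by
    rw [← h (m + k)]
    obtain rfl | hm : m = -1 ∨ m < -1 := by omega
    · norm_num [E2, wT, sT]
      ring_nf
    · simp (disch := omega) only [E2, wT, sT, if_pos, if_neg]
      ring_nf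
  have anti := E2_antisymm 0 A B (wT q k w) (sT q k s) m
  rcases lt_trichotomy m 0 with hm | rfl | hm
  · exact neg m hm
  · exact self_eq_neg.mp (by simpa using anti)
  · rw [neg _ (by omega)] at anti
    exact neg_eq_zero.mp anti.symm

lemma E3_T (q k : ℤ) (A B : ℝ) (w t : ℤ → ℂ) (h : ∀ m, E3 q A B w t m = 0) (m : ℤ) :
    E3 0 A B (wT q k w) (tT q k t) m = 0 := by
  have neg (m : ℤ) (hm : m < 0) : E3 0 A B (wT q k w) (tT q k t) m = 0 := by
    rw [← h (m + k)]
    obtain rfl | hm : m = -1 ∨ m < -1 := by omega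
    · norm_num [E3, wT, tT]
      ring_nf
    · simp (disch := omega) only [E3, wT, tT, if_pos, if_neg]
      ring_nf
  have anti := E3_antisymm 0 A B (wT q k w) (tT q k t) m
  rcases lt_trichotomy m 0 with hm | rfl | hm
  · exact neg m hm
  · exact self_eq_neg.mp (by simpa using anti)
  · rw [neg _ (by omega)] at anti
    exact neg_eq_zero.mp anti.symm

theorem stmt9 (q : ℤ) (hq : 0 ≤ q) (A B : ℝ) (ω σ τ : ℤ → ℤ → ℂ)
    (hω : (Function.support fun p : ℤ × ℤ => ω p.1 p.2).Finite)
    (hσ : (Function.support fun p : ℤ × ℤ => σ p.1 p.2).Finite)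
    (hτ : (Function.support fun p : ℤ × ℤ => τ p.1 p.2).Finite)
    (k : ℤ) (hk : 0 ≤ k)
    (hA1 : ∀ m n : ℤ, A1 q A B ω σ τ m n = 0)
    (hA2 : ∀ m n : ℤ, A2 q A B ω σ τ m n = 0)
    (hA3 : ∀ m n : ℤ, A3 q A B ω σ τ m n = 0) :
    (∀ m n : ℤ, A1 0 A B (omegaT q k ω) (sigmaT q k σ) (tauT q k τ) m n = 0) ∧
    (∀ m n : ℤ, A2 0 A B (omegaT q k ω) (sigmaT q k σ) (tauT q k τ) m n = 0) ∧
    (∀ m n : ℤ, A3 0 A B (omegaT q k ω) (sigmaT q k σ) (tauT q k τ) m n = 0) := by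
  obtain ⟨N₁, hN₁⟩ := eventually_zero ω hω
  obtain ⟨N₂, hN₂⟩ := eventually_zero σ hσ
  obtain ⟨N₃, hN₃⟩ := eventually_zero τ hτ
  refine ⟨fun m n => ?_, fun m n => ?_, fun m n => ?_⟩
  · by_cases hmn : m + n = 1
    · obtain rfl : n = 1 - m := by omega
      have h1 (m : ℤ) := (A1_diag q A B ω σ τ m).symm.trans (hA1 m (1 - m))
      rw [A1_diag, omegaT_diag, sigmaT_diag, tauT_diag]
      exact E1_T q k A B _ _ _ h1 (v_symm q A B _ _ _ h1 (max N₁ (max N₂ N₃))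
        (fun i hi => hN₁ _ _ (by omega)) (fun i hi => hN₂ _ _ (by omega))
        (fun i hi => hN₃ _ _ (by omega))) m
    · simp (disch := omega) [A1, omegaT_off, sigmaT_off, tauT_off]
  · by_cases hmn : m + n = 0
    · obtain rfl : n = -m := by omega
      rw [A2_diag, omegaT_diag, sigmaT_diag]
      exact E2_T q k A B _ _ (fun m => (A2_diag q A B ω σ τ m).symm.trans (hA2 m (-m))) m
    · simp (disch := omega) [A2, omegaT_off, sigmaT_off]
  · by_cases hmn : m + n = 0
    · obtain rfl : n = -m := by omega
      rw [A3_diag, omegaT_diag, tauT_diag]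
      exact E3_T q k A B _ _ (fun m => (A3_diag q A B ω σ τ m).symm.trans (hA3 m (-m))) m
    · simp (disch := omega) [A3, omegaT_off, tauT_off]
end

section
/- Suppose there exists c ∈ ℝ³ such that for all x ∈ ℝ: sin θ · e^{−ω(x,0)} · ∂ᵧu(x,0) − cos θ · N(x,0) = (ε/R) · (u(x,0) − c) (that is, the restriction of u to the line y = 0 lies on the sphere of centre c and radius R, and u makes constant angle θ with this sphere along this curve). Then for all x ∈ ℝ: ∂ᵧω(x,0) = (ε/(R sin θ)) · e^{ω(x,0)} + (cos θ/(2 sin θ)) · (e^{ω(x,0)} + e^{−ω(x,0)}). -/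
/-!
Let `p = (x, 0)`. Differentiating the sphere condition along the line `y = 0` and pairing with `∂ₓu`
removes the term containing `∂ₓω`, because `∂ᵧu ⟂ ∂ₓu`, and leaves
`sin θ e^{-ω} ⟨∂ₓ∂ᵧu, ∂ₓu⟩ - cos θ ⟨∂ₓN, ∂ₓu⟩ = (ε / R) e^{2ω}`.
By symmetry of second derivatives, differentiating `⟨∂ₓu, ∂ₓu⟩ = e^{2ω}` in the `y`-direction gives
`⟨∂ₓ∂ᵧu, ∂ₓu⟩ = ∂ᵧω e^{2ω}` (`inner_pdxy_pdx`). Together with the prescribed value of `⟨∂ₓN, ∂ₓu⟩`,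
dividing by `sin θ e^ω` yields the formula.
-/

open scoped RealInnerProductSpace

/-- Partial derivative in the x-direction. -/
noncomputable def pdx (f : ℝ × ℝ → EuclideanSpace ℝ (Fin 3)) (p : ℝ × ℝ) :
    EuclideanSpace ℝ (Fin 3) := fderiv ℝ f p (1, 0)

/-- Partial derivative in the y-direction. -/
noncomputable def pdy (f : ℝ × ℝ → EuclideanSpace ℝ (Fin 3)) (p : ℝ × ℝ) :
    EuclideanSpace ℝ (Fin 3) := fderiv ℝ f p (0, 1)

/-- Mixed partial derivative ∂ₓ∂ᵧ. -/
noncomputable def pdxy (f : ℝ × ℝ → EuclideanSpace ℝ (Fin 3)) (p : ℝ × ℝ) :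
    EuclideanSpace ℝ (Fin 3) := fderiv ℝ (fun z => fderiv ℝ f z (0, 1)) p (1, 0)

/-- Partial derivative in the y-direction of a real-valued function. -/
noncomputable def pdyR (f : ℝ × ℝ → ℝ) (p : ℝ × ℝ) : ℝ := fderiv ℝ f p (0, 1)

theorem hasDerivAt_comp_horizontal {E : Type*} [NormedAddCommGroup E] [NormedSpace ℝ E]
    {f : ℝ × ℝ → E} {x y : ℝ} (hf : DifferentiableAt ℝ f (x, y)) :
    HasDerivAt (fun t => f (t, y)) (fderiv ℝ f (x, y) (1, 0)) x :=
  hf.hasFDerivAt.comp_hasDerivAt x ((hasDerivAt_id x).prodMk (hasDerivAt_const x y))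

theorem hasDerivAt_comp_vertical {E : Type*} [NormedAddCommGroup E] [NormedSpace ℝ E]
    {f : ℝ × ℝ → E} {x y : ℝ} (hf : DifferentiableAt ℝ f (x, y)) :
    HasDerivAt (fun t => f (x, t)) (fderiv ℝ f (x, y) (0, 1)) y :=
  hf.hasFDerivAt.comp_hasDerivAt y ((hasDerivAt_const y x).prodMk (hasDerivAt_id y))

theorem differentiable_fderiv_apply {u : ℝ × ℝ → EuclideanSpace ℝ (Fin 3)}
    (hu : ContDiff ℝ 2 u) (v : ℝ × ℝ) : Differentiable ℝ (fun z => fderiv ℝ u z v) :=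
  ((hu.fderiv_right (m := 1) (by norm_num)).differentiable (by norm_num)).clm_apply
    (differentiable_const v)

theorem pdxy_eq_fderiv_pdx {u : ℝ × ℝ → EuclideanSpace ℝ (Fin 3)}
    (hu : ContDiff ℝ 2 u) (p : ℝ × ℝ) : pdxy u p = fderiv ℝ (pdx u) p (0, 1) := by
  have hd : DifferentiableAt ℝ (fderiv ℝ u) p :=
    (hu.fderiv_right (m := 1) (by norm_num)).differentiable (by norm_num) p
  have hs : IsSymmSndFDerivAt ℝ u p := hu.contDiffAt.isSymmSndFDerivAt (by simp)
  have key : ∀ v w : ℝ × ℝ,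
      fderiv ℝ (fun z => fderiv ℝ u z v) p w = fderiv ℝ (fderiv ℝ u) p w v := by
    intro v w
    rw [fderiv_clm_apply hd (differentiableAt_const v)]
    simp
  change fderiv ℝ (fun z => fderiv ℝ u z (0, 1)) p (1, 0) =
    fderiv ℝ (fun z => fderiv ℝ u z (1, 0)) p (0, 1)
  rw [key, key]
  exact hs.eq _ _

/-- The `y`-derivative of the conformality relation `⟨∂ₓu, ∂ₓu⟩ = e^{2ω}`. -/
theorem inner_pdxy_pdx {u : ℝ × ℝ → EuclideanSpace ℝ (Fin 3)} {ω : ℝ × ℝ → ℝ}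
    (hu : ContDiff ℝ 2 u) (hω : ContDiff ℝ 1 ω)
    (hxx : ∀ p : ℝ × ℝ, ⟪pdx u p, pdx u p⟫ = Real.exp (2 * ω p)) (x y : ℝ) :
    ⟪pdxy u (x, y), pdx u (x, y)⟫ = pdyR ω (x, y) * Real.exp (2 * ω (x, y)) := by
  have h1 : HasDerivAt (fun t => pdx u (x, t)) (pdxy u (x, y)) y := by
    rw [pdxy_eq_fderiv_pdx hu]
    exact hasDerivAt_comp_vertical (differentiable_fderiv_apply hu (1, 0) (x, y))
  have h2 : HasDerivAt (fun t => ω (x, t)) (pdyR ω (x, y)) y :=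
    hasDerivAt_comp_vertical (hω.differentiable (by norm_num) (x, y))
  have h3 := h1.inner ℝ h1
  have h4 := (h2.const_mul 2).exp
  simp only [hxx] at h3
  have h5 := h3.unique h4
  rw [real_inner_comm] at h5
  linarith

theorem stmt11
    (u N : ℝ × ℝ → EuclideanSpace ℝ (Fin 3)) (ω : ℝ × ℝ → ℝ)
    (hu : ContDiff ℝ 2 u) (hN : ContDiff ℝ 1 N) (hω : ContDiff ℝ 1 ω)
    (hxx : ∀ p : ℝ × ℝ, ⟪pdx u p, pdx u p⟫ = Real.exp (2 * ω p))
    (hyy : ∀ p : ℝ × ℝ, ⟪pdy u p, pdy u p⟫ = Real.exp (2 * ω p))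
    (hxy : ∀ p : ℝ × ℝ, ⟪pdx u p, pdy u p⟫ = 0)
    (hNN : ∀ p : ℝ × ℝ, ⟪N p, N p⟫ = 1)
    (hNx : ∀ p : ℝ × ℝ, ⟪N p, pdx u p⟫ = 0)
    (hNy : ∀ p : ℝ × ℝ, ⟪N p, pdy u p⟫ = 0)
    (hIIx : ∀ p : ℝ × ℝ,
      ⟪pdx N p, pdx u p⟫ = (1/2) * Real.exp (2 * ω p) * (1 + Real.exp (-(2 * ω p))))
    (hIIxy : ∀ p : ℝ × ℝ, ⟪pdx N p, pdy u p⟫ = 0)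
    (hmix : ∀ p : ℝ × ℝ, ⟪pdxy u p, N p⟫ = 0)
    (θ R ε : ℝ) (hθ : Real.sin θ ≠ 0) (hR : 0 < R) (hε : ε = 1 ∨ ε = -1)
    (c : EuclideanSpace ℝ (Fin 3))
    (hsphere : ∀ x : ℝ,
      Real.sin θ • (Real.exp (-ω (x, 0)) • pdy u (x, 0)) - Real.cos θ • N (x, 0)
        = (ε / R) • (u (x, 0) - c)) :
    ∀ x : ℝ,
      pdyR ω (x, 0) = (ε / (R * Real.sin θ)) * Real.exp (ω (x, 0))
        + (Real.cos θ / (2 * Real.sin θ)) * (Real.exp (ω (x, 0)) + Real.exp (-ω (x, 0))) := by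
  intro x
  have hy : HasDerivAt (fun t => pdy u (t, 0)) (pdxy u (x, 0)) x :=
    hasDerivAt_comp_horizontal (differentiable_fderiv_apply hu (0, 1) (x, 0))
  have hω' := hasDerivAt_comp_horizontal (hω.differentiable (by norm_num) (x, 0))
  have hN' : HasDerivAt (fun t => N (t, 0)) (pdx N (x, 0)) x :=
    hasDerivAt_comp_horizontal (hN.differentiable (by norm_num) (x, 0))
  have hu' : HasDerivAt (fun t => u (t, 0)) (pdx u (x, 0)) x :=
    hasDerivAt_comp_horizontal (hu.differentiable (by norm_num) (x, 0))
  have hL := ((hω'.neg.exp.smul hy).const_smul (Real.sin θ)).sub (hN'.const_smul (Real.cos θ))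
  have hR' := (hu'.sub_const c).const_smul (ε / R)
  have heq := hL.unique (hR'.congr_of_eventuallyEq (Filter.Eventually.of_forall hsphere))
  have hi := congrArg (fun v => ⟪v, pdx u (x, 0)⟫) heq
  have hyx : ⟪pdy u (x, 0), pdx u (x, 0)⟫ = 0 := by rw [real_inner_comm, hxy]
  simp only [inner_sub_left, inner_add_left, real_inner_smul_left, hyx, hIIx, hxx,
    inner_pdxy_pdx hu hω hxx, Pi.neg_apply] at hi
  have e2 : Real.exp (2 * ω (x, 0)) = Real.exp (ω (x, 0)) ^ 2 := by
    rw [← Real.exp_nat_mul]; norm_num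
  rw [Real.exp_neg (2 * _), Real.exp_neg, e2] at hi
  rw [Real.exp_neg]
  have hE := Real.exp_pos (ω (x, 0))
  generalize Real.exp (ω (x, 0)) = E at *
  field_simp at hi ⊢
  -- The remaining identity is `hi` with a common factor `E` removed.
  apply mul_left_cancel₀ hE.ne'
  linear_combination hi
end
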